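/- For every x and r > 0 such that B̄_x(r') ⊆ Ω for all r' in a neighborhood of r, the function r ↦ H_φ(x,r) is differentiable at r and ∂_r H_φ(x,r) = (3/r) H_φ(x,r) + 2 D_φ(x,r). -/

import Mathlib

open Metric MeasureTheory
open scoped RealInnerProductSpace

noncomputable section

abbrev E4 := EuclideanSpace ℝ (Fin 4)

variable {E : Type*} [NormedAddCommGroup E] [InnerProductSpace ℝ E] [FiniteDimensional ℝ E]

/-- `u` is smooth and harmonic (the Laplacian, i.e. the sum of the pure second
derivatives in the coordinate directions, vanishes) on `Ω`. -/
def IsHarmonicOn (u : E4 → E) (Ω : Set E4) : Prop :=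
  ContDiffOn ℝ (⊤ : ℕ∞) u Ω ∧
  ∀ x ∈ Ω, ∑ i : Fin 4,
    iteratedFDeriv ℝ 2 u x ![EuclideanSpace.single i (1:ℝ), EuclideanSpace.single i 1] = 0

/-- `|∇u(y)|²`, the squared Frobenius norm of the derivative of `u` at `y`. -/
def gradSq (u : E4 → E) (y : E4) : ℝ :=
  ∑ i : Fin 4, ‖fderiv ℝ u y (EuclideanSpace.single i (1:ℝ))‖ ^ 2

/-- `D_φ(x,r) = ∫ |∇u(y)|² φ(|y−x|/r) dy`. -/
def Dphi (φ : ℝ → ℝ) (u : E4 → E) (x : E4) (r : ℝ) : ℝ :=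
  ∫ y, gradSq u y * φ (‖y - x‖ / r)

/-- `H_φ(x,r) = −∫ |u(y)|² |y−x|⁻¹ φ'(|y−x|/r) dy`. -/
def Hphi (φ : ℝ → ℝ) (u : E4 → E) (x : E4) (r : ℝ) : ℝ :=
  -∫ y, ‖u y‖ ^ 2 * ‖y - x‖⁻¹ * deriv φ (‖y - x‖ / r)

/-- `E_φ(x,r) = −∫ |∂_{ν_x}u(y)|² |y−x| φ'(|y−x|/r) dy`, where `ν_x(y) = (y−x)/|y−x|`. -/
def Ephi (φ : ℝ → ℝ) (u : E4 → E) (x : E4) (r : ℝ) : ℝ :=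
  -∫ y, ‖fderiv ℝ u y (‖y - x‖⁻¹ • (y - x))‖ ^ 2 * ‖y - x‖ * deriv φ (‖y - x‖ / r)

/-- The smoothed frequency `N_φ(x,r) = r D_φ(x,r) / H_φ(x,r)`. -/
def Nphi (φ : ℝ → ℝ) (u : E4 → E) (x : E4) (r : ℝ) : ℝ :=
  r * Dphi φ u x r / Hphi φ u x r

/-! Substituting `y = x + r z` turns the smoothed integral of `f` over the sphere of radius `r` in
dimension `n` into `-r ^ (n - 1) ∫ f(x + r z) k(z) dz` with `k(z) = φ'(‖z‖) / ‖z‖`, in which only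
`f` depends on `r`. Differentiating the power gives the term with factor `(n - 1) / r`;
differentiating `f` gives the integral of its radial derivative. Since `k(z) z` is the gradient of
`φ ‖z‖`, Green's identity turns the latter into `∫ Δf(y) φ(‖y - x‖ / r) dy`. For `f = ‖u‖ ^ 2` with
`u` harmonic, `Δf = 2 |∇u| ^ 2`. No second derivative of `φ` enters. -/

section General

open Filter InnerProductSpace Laplacian Module Topology

section CompactlySupportedWeight

variable {α : Type*} [TopologicalSpace α] [MeasurableSpace α] [OpensMeasurableSpace α]
  {μ : Measure α} [IsFiniteMeasureOnCompacts μ] {k : α → ℝ}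

theorem integrable_mul_of_continuousOn_tsupport {f : α → ℝ} (hk : Continuous k)
    (hkc : HasCompactSupport k) (hf : ContinuousOn f (tsupport k)) :
    Integrable (fun a ↦ f a * k a) μ :=
  (integrableOn_iff_integrable_of_support_subset
    (Function.support_mul_subset_right f k |>.trans (subset_tsupport k))).1
    ((hf.mul hk.continuousOn).integrableOn_compact' hkc (isClosed_tsupport k).measurableSet)

theorem hasDerivAt_integral_mul_of_hasCompactSupport [R1Space α] {F F' : ℝ → α → ℝ} {s : Set ℝ}
    {t₀ : ℝ} (hs : s ∈ 𝓝 t₀) (hk : Continuous k) (hkc : HasCompactSupport k)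
    (hF : ∀ t ∈ s, ContinuousOn (F t) (tsupport k))
    (hF' : ContinuousOn (Function.uncurry F') (s ×ˢ tsupport k))
    (hderiv : ∀ t ∈ s, ∀ a ∈ tsupport k, HasDerivAt (F · a) (F' t a) t) :
    HasDerivAt (fun t ↦ ∫ a, F t a * k a ∂μ) (∫ a, F' t₀ a * k a ∂μ) t₀ := by
  obtain ⟨K, hK, hKs, hKc⟩ := local_compact_nhds hs
  obtain ⟨C, hC⟩ := (hKc.prod hkc.isCompact).exists_bound_of_continuousOn
    (hF'.mono (Set.prod_mono_left hKs))
  have hF'₀ : ContinuousOn (F' t₀) (tsupport k) :=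
    hF'.comp (f := fun a ↦ (t₀, a)) (by fun_prop) fun a ha ↦ ⟨mem_of_mem_nhds hs, ha⟩
  have integrable_F : ∀ t ∈ s, Integrable (fun a ↦ F t a * k a) μ := fun t ht ↦
    integrable_mul_of_continuousOn_tsupport hk hkc (hF t ht)
  refine (hasDerivAt_integral_of_dominated_loc_of_deriv_le (F' := fun t a ↦ F' t a * k a)
    (bound := fun a ↦ C * ‖k a‖) hK ?_ (integrable_F t₀ (mem_of_mem_nhds hs))
    (integrable_mul_of_continuousOn_tsupport hk hkc hF'₀).aestronglyMeasurable ?_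
    ((hk.integrable_of_hasCompactSupport hkc).norm.const_mul C) ?_).2
  · filter_upwards [hs] with t ht using (integrable_F t ht).aestronglyMeasurable
  · refine .of_forall fun a t ht ↦ ?_
    by_cases ha : a ∈ tsupport k
    · rw [norm_mul]
      gcongr
      exact hC (t, a) ⟨ht, ha⟩
    · simp [image_eq_zero_of_notMem_tsupport ha]
  · refine .of_forall fun a t ht ↦ ?_
    by_cases ha : a ∈ tsupport k
    · exact (hderiv t (hKs ht) a ha).mul_const (k a)
    · simpa [image_eq_zero_of_notMem_tsupport ha] using hasDerivAt_const t (0 : ℝ)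

end CompactlySupportedWeight

section IntegrationByParts

variable {V : Type*} [NormedAddCommGroup V] [NormedSpace ℝ V]

theorem contDiffAt_fderiv_apply {F : Type*} [NormedAddCommGroup F] [NormedSpace ℝ F]
    {f : V → F} {y : V} {m n : WithTop ℕ∞} (hf : ContDiffAt ℝ n f y) (hmn : m + 1 ≤ n) (w : V) :
    ContDiffAt ℝ m (fun z ↦ fderiv ℝ f z w) y :=
  (hf.fderiv_right hmn).clm_apply contDiffAt_const

variable [FiniteDimensional ℝ V] [MeasurableSpace V] [BorelSpace V] {μ : Measure V}
  [μ.IsAddHaarMeasure]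

theorem integral_mul_fderiv_eq_neg_of_hasCompactSupport {g ψ : V → ℝ}
    (hg : ∀ y ∈ tsupport ψ, ContDiffAt ℝ 1 g y) (hψ : ContDiff ℝ 1 ψ) (hψc : HasCompactSupport ψ)
    (w : V) :
    ∫ y, g y * fderiv ℝ ψ y w ∂μ = -∫ y, fderiv ℝ g y w * ψ y ∂μ := by
  have hg_cont : ContinuousOn g (tsupport ψ) := fun y hy ↦
    (hg y hy).continuousAt.continuousWithinAt
  have hdg_cont : ContinuousOn (fun y ↦ fderiv ℝ g y w) (tsupport ψ) := fun y hy ↦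
    (contDiffAt_fderiv_apply (m := 0) (hg y hy) le_rfl w).continuousAt.continuousWithinAt
  have hdψ_cont : Continuous fun y ↦ fderiv ℝ ψ y w :=
    (hψ.continuous_fderiv one_ne_zero).clm_apply continuous_const
  exact integral_mul_fderiv_eq_neg_fderiv_mul_of_integrable
    (integrable_mul_of_continuousOn_tsupport hψ.continuous hψc hdg_cont)
    (integrable_mul_of_continuousOn_tsupport hdψ_cont (hψc.fderiv_apply ℝ w)
      (hg_cont.mono (tsupport_fderiv_apply_subset ℝ w)))
    (integrable_mul_of_continuousOn_tsupport hψ.continuous hψc hg_cont)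
    (fun y hy ↦ (hg y hy).differentiableAt one_ne_zero)
    (fun y _ ↦ hψ.differentiable one_ne_zero y)

end IntegrationByParts

section Laplacian

variable {V : Type*} [NormedAddCommGroup V] [InnerProductSpace ℝ V] [FiniteDimensional ℝ V]
  {F : Type*} [NormedAddCommGroup F]
  {ι : Type*} [Fintype ι]

theorem laplacian_eq_sum_fderiv_fderiv [NormedSpace ℝ F] {f : V → F} {y : V}
    (hf : ContDiffAt ℝ 2 f y) (b : OrthonormalBasis ι ℝ V) :
    Δ f y = ∑ i, fderiv ℝ (fun z ↦ fderiv ℝ f z (b i)) y (b i) := by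
  have hdf : DifferentiableAt ℝ (fderiv ℝ f) y :=
    (hf.fderiv_right (m := 1) (by norm_num)).differentiableAt one_ne_zero
  rw [laplacian_eq_iteratedFDeriv_orthonormalBasis f b]
  refine Finset.sum_congr rfl fun i _ ↦ ?_
  rw [iteratedFDeriv_two_apply, fderiv_clm_apply hdf (differentiableAt_const _)]
  simp

theorem laplacian_norm_sq [InnerProductSpace ℝ F] {u : V → F} {y : V}
    (hu : ContDiffAt ℝ 2 u y) (b : OrthonormalBasis ι ℝ V) :
    Δ (fun z ↦ ‖u z‖ ^ 2) y = 2 * ∑ i, ‖fderiv ℝ u y (b i)‖ ^ 2 + 2 * ⟪u y, Δ u y⟫ := by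
  have fderiv_norm_sq_eventuallyEq (w : V) : (fun z ↦ fderiv ℝ (fun z ↦ ‖u z‖ ^ 2) z w)
      =ᶠ[𝓝 y] fun z ↦ 2 * ⟪u z, fderiv ℝ u z w⟫ := by
    filter_upwards [hu.eventually (by simp)] with z hz
    have hz' := (hz.differentiableAt two_ne_zero).hasFDerivAt.norm_sq
    simp [hz'.fderiv]
  have second_fderiv_norm_sq (w : V) : fderiv ℝ (fun z ↦ fderiv ℝ (fun z ↦ ‖u z‖ ^ 2) z w) y w =
      2 * ‖fderiv ℝ u y w‖ ^ 2 + 2 * ⟪u y, fderiv ℝ (fun z ↦ fderiv ℝ u z w) y w⟫ := by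
    have hdw : DifferentiableAt ℝ (fun z ↦ fderiv ℝ u z w) y :=
      (contDiffAt_fderiv_apply hu one_add_one_eq_two.le w).differentiableAt one_ne_zero
    have hu' := hu.differentiableAt two_ne_zero
    rw [(fderiv_norm_sq_eventuallyEq w).fderiv_eq, fderiv_const_mul (hu'.inner ℝ hdw),
      _root_.smul_apply, fderiv_inner_apply ℝ hu' hdw, real_inner_self_eq_norm_sq,
      smul_eq_mul]
    ring
  rw [laplacian_eq_sum_fderiv_fderiv (hu.norm_sq ℝ) b, laplacian_eq_sum_fderiv_fderiv hu b,
    inner_sum, Finset.mul_sum, Finset.mul_sum, ← Finset.sum_add_distrib]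
  exact Finset.sum_congr rfl fun i _ ↦ second_fderiv_norm_sq (b i)

variable [MeasurableSpace V] [BorelSpace V]

theorem integral_sum_fderiv_mul_fderiv_eq_neg_integral_laplacian_mul {f ψ : V → ℝ}
    (hf : ∀ y ∈ tsupport ψ, ContDiffAt ℝ 2 f y) (hψ : ContDiff ℝ 1 ψ) (hψc : HasCompactSupport ψ)
    (b : OrthonormalBasis ι ℝ V) :
    ∫ y, ∑ i, fderiv ℝ f y (b i) * fderiv ℝ ψ y (b i) = -∫ y, Δ f y * ψ y := by
  have hdf (i) : ∀ y ∈ tsupport ψ, ContDiffAt ℝ 1 (fun z ↦ fderiv ℝ f z (b i)) y := fun y hy ↦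
    contDiffAt_fderiv_apply (hf y hy) one_add_one_eq_two.le (b i)
  have integrable_fderiv_mul_fderiv (i) :
      Integrable fun y ↦ fderiv ℝ f y (b i) * fderiv ℝ ψ y (b i) :=
    integrable_mul_of_continuousOn_tsupport
      ((hψ.continuous_fderiv one_ne_zero).clm_apply continuous_const) (hψc.fderiv_apply ℝ (b i))
      fun y hy ↦ (hdf i y (tsupport_fderiv_apply_subset ℝ (b i) hy)).continuousAt.continuousWithinAt
  have integrable_second_fderiv_mul (i) :
      Integrable fun y ↦ fderiv ℝ (fun z ↦ fderiv ℝ f z (b i)) y (b i) * ψ y :=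
    integrable_mul_of_continuousOn_tsupport hψ.continuous hψc fun y hy ↦
      (contDiffAt_fderiv_apply (m := 0) (hdf i y hy) le_rfl _).continuousAt.continuousWithinAt
  calc ∫ y, ∑ i, fderiv ℝ f y (b i) * fderiv ℝ ψ y (b i)
      = -∑ i, ∫ y, fderiv ℝ (fun z ↦ fderiv ℝ f z (b i)) y (b i) * ψ y := by
        rw [integral_finsetSum _ fun i _ ↦ integrable_fderiv_mul_fderiv i,
          ← Finset.sum_neg_distrib]
        exact Finset.sum_congr rfl fun i _ ↦
          integral_mul_fderiv_eq_neg_of_hasCompactSupport (hdf i) hψ hψc (b i)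
    _ = -∫ y, Δ f y * ψ y := by
        rw [← integral_finsetSum _ fun i _ ↦ integrable_second_fderiv_mul i]
        congr with y
        by_cases hy : y ∈ tsupport ψ
        · rw [laplacian_eq_sum_fderiv_fderiv (hf y hy) b, Finset.sum_mul]
        · simp only [image_eq_zero_of_notMem_tsupport hy, mul_zero, Finset.sum_const_zero]

theorem integral_fderiv_gradient_eq_neg_integral_laplacian_mul {f ψ : V → ℝ} {G : V → V}
    (hf : ∀ y ∈ tsupport ψ, ContDiffAt ℝ 2 f y) (hψc : HasCompactSupport ψ)
    (hψ : ∀ y, HasFDerivAt ψ (innerSL ℝ (G y)) y) (hG : Continuous G) :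
    ∫ y, fderiv ℝ f y (G y) = -∫ y, Δ f y * ψ y := by
  have hψ_contDiff : ContDiff ℝ 1 ψ :=
    contDiff_one_iff_hasFDerivAt.2 ⟨_, (innerSL ℝ).continuous.comp hG, hψ⟩
  let b := stdOrthonormalBasis ℝ V
  rw [← integral_sum_fderiv_mul_fderiv_eq_neg_integral_laplacian_mul hf hψ_contDiff hψc b]
  congr with y
  conv_lhs => rw [← b.sum_repr' (G y)]
  simp [(hψ y).fderiv, real_inner_comm, mul_comm]

end Laplacian

theorem eventually_forall_add_smul_of_forall_closedBall {V : Type*} [NormedAddCommGroup V]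
    [NormedSpace ℝ V] [ProperSpace V] {p : V → Prop} {x : V} {r : ℝ}
    (hp : ∀ y ∈ closedBall x r, ∀ᶠ z in 𝓝 y, p z) (hr : 0 ≤ r) :
    ∀ᶠ t in 𝓝 r, ∀ z ∈ closedBall (0 : V) 1, p (x + t • z) := by
  refine (isCompact_closedBall 0 1).eventually_forall_of_forall_eventually fun z hz ↦ ?_
  have mem_ball : x + r • z ∈ closedBall x r := by
    rw [mem_closedBall_zero_iff] at hz
    simpa [norm_smul, abs_of_nonneg hr] using mul_le_of_le_one_right hr hz
  have tendsto_rescale : Tendsto (fun q : ℝ × V ↦ x + q.1 • q.2) (𝓝 (r, z)) (𝓝 (x + r • z)) :=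
    Continuous.tendsto (by fun_prop) (r, z)
  exact tendsto_rescale.eventually (hp _ mem_ball)

/-- A function `φ` whose radial extension `z ↦ φ ‖z‖` is a `C¹` cutoff supported in the closed unit
ball. Flatness near `0` keeps both `φ ‖z‖` and the kernel `φ' ‖z‖ / ‖z‖` regular at the origin. -/
structure IsRadialCutoff (φ : ℝ → ℝ) : Prop where
  contDiff : ContDiff ℝ 1 φ
  deriv_eventually_eq_zero : ∀ᶠ t in 𝓝 0, deriv φ t = 0
  eq_zero_of_one_le : ∀ t, 1 ≤ t → φ t = 0

/-- The radial kernel `k(z) = φ'(‖z‖) / ‖z‖`, for which `∇ (φ ‖z‖) = k(z) z`. -/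
def radialKernel {V : Type*} [NormedAddCommGroup V] (φ : ℝ → ℝ) (z : V) : ℝ :=
  ‖z‖⁻¹ * deriv φ ‖z‖

/-- The smoothed integral of `f` over the sphere of radius `r` about `x`: as `φ` tends to the
indicator function of `[0, 1)`, the measure `-‖y - x‖⁻¹ φ'(‖y - x‖ / r) dy` tends to the surface
measure of that sphere. -/
def smoothedSphereIntegral {V : Type*} [NormedAddCommGroup V] [InnerProductSpace ℝ V]
    [FiniteDimensional ℝ V] [MeasurableSpace V] [BorelSpace V]
    (φ : ℝ → ℝ) (f : V → ℝ) (x : V) (r : ℝ) : ℝ :=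
  -∫ y, f y * ‖y - x‖⁻¹ * deriv φ (‖y - x‖ / r)

section RadialCutoff

variable {V : Type*} [NormedAddCommGroup V] {φ : ℝ → ℝ}

theorem IsRadialCutoff.of_eventuallyEq_const {c : ℝ} (hφ : ContDiff ℝ 1 φ)
    (hc : φ =ᶠ[𝓝 0] fun _ ↦ c) (hφ0 : ∀ t, 1 ≤ t → φ t = 0) : IsRadialCutoff φ where
  contDiff := hφ
  deriv_eventually_eq_zero := by
    filter_upwards [hc.deriv] with t ht
    rw [ht, deriv_const]
  eq_zero_of_one_le := hφ0

theorem IsRadialCutoff.deriv_eq_zero_of_one_lt (hφ : IsRadialCutoff φ) {t : ℝ} (ht : 1 < t) :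
    deriv φ t = 0 := by
  have : φ =ᶠ[𝓝 t] fun _ ↦ 0 := by
    filter_upwards [Ioi_mem_nhds ht] with s hs using hφ.eq_zero_of_one_le s (le_of_lt hs)
  rw [this.deriv_eq, deriv_const]

theorem IsRadialCutoff.tsupport_radialKernel_subset (hφ : IsRadialCutoff φ) :
    tsupport (radialKernel φ : V → ℝ) ⊆ closedBall 0 1 := by
  refine closure_minimal (fun z hz ↦ ?_) isClosed_closedBall
  contrapose! hz
  rw [mem_closedBall_zero_iff, not_le] at hz
  simp [radialKernel, hφ.deriv_eq_zero_of_one_lt hz]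

theorem IsRadialCutoff.hasCompactSupport_radialKernel [ProperSpace V] (hφ : IsRadialCutoff φ) :
    HasCompactSupport (radialKernel φ : V → ℝ) :=
  (isCompact_closedBall 0 1).of_isClosed_subset (isClosed_tsupport _)
    hφ.tsupport_radialKernel_subset

theorem IsRadialCutoff.continuous_radialKernel (hφ : IsRadialCutoff φ) :
    Continuous (radialKernel φ : V → ℝ) := by
  refine continuous_iff_continuousAt.2 fun z ↦ ?_
  rcases eq_or_ne z 0 with rfl | hz
  · have : radialKernel φ =ᶠ[𝓝 (0 : V)] fun _ ↦ 0 := by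
      have norm_tendsto : Tendsto (‖·‖) (𝓝 (0 : V)) (𝓝 0) := tendsto_norm_zero
      filter_upwards [norm_tendsto.eventually hφ.deriv_eventually_eq_zero] with z hz
      simp [radialKernel, hz]
    exact continuousAt_const.congr this.symm
  · exact (continuous_norm.continuousAt.inv₀ (norm_ne_zero_iff.2 hz)).mul
      ((hφ.contDiff.continuous_deriv le_rfl).comp continuous_norm).continuousAt

theorem IsRadialCutoff.rescale_eq_zero_of_notMem_closedBall (hφ : IsRadialCutoff φ) {x y : V}
    {r : ℝ} (hr : 0 < r) (hy : y ∉ closedBall x r) : φ (‖y - x‖ / r) = 0 := by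
  rw [mem_closedBall_iff_norm, not_le] at hy
  exact hφ.eq_zero_of_one_le _ ((one_le_div₀ hr).2 hy.le)

theorem IsRadialCutoff.tsupport_rescale_subset (hφ : IsRadialCutoff φ) (x : V) {r : ℝ}
    (hr : 0 < r) : tsupport (fun y ↦ φ (‖y - x‖ / r)) ⊆ closedBall x r :=
  closure_minimal (fun _ hy ↦ not_not.1 (mt (hφ.rescale_eq_zero_of_notMem_closedBall hr) hy))
    isClosed_closedBall

variable [InnerProductSpace ℝ V]

theorem hasFDerivAt_norm {z : V} (hz : z ≠ 0) :
    HasFDerivAt (fun z : V ↦ ‖z‖) (‖z‖⁻¹ • innerSL ℝ z) z := by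
  have h := (hasStrictFDerivAt_norm_sq z).hasFDerivAt.sqrt (by simpa using hz)
  simp only [Real.sqrt_sq (norm_nonneg _)] at h
  convert h using 1
  module

theorem IsRadialCutoff.hasFDerivAt_comp_norm (hφ : IsRadialCutoff φ) (z : V) :
    HasFDerivAt (fun z : V ↦ φ ‖z‖) (innerSL ℝ (radialKernel φ z • z)) z := by
  have hφ' : HasDerivAt φ (deriv φ ‖z‖) ‖z‖ :=
    (hφ.contDiff.differentiable one_ne_zero _).hasDerivAt
  rcases eq_or_ne z 0 with rfl | hz
  · rw [norm_zero, hφ.deriv_eventually_eq_zero.self_of_nhds, hasDerivAt_iff_isLittleO_nhds_zero]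
      at hφ'
    rw [hasFDerivAt_iff_isLittleO_nhds_zero]
    simpa [Function.comp_def] using (hφ'.comp_tendsto (tendsto_norm_zero (E := V))).of_norm_right
  · refine (hφ'.comp_hasFDerivAt z (hasFDerivAt_norm hz)).congr_fderiv ?_
    rw [radialKernel, map_smul, smul_smul, mul_comm]

theorem IsRadialCutoff.hasFDerivAt_rescale (hφ : IsRadialCutoff φ) (x : V) {r : ℝ} (hr : 0 < r)
    (y : V) : HasFDerivAt (fun y ↦ φ (‖y - x‖ / r))
      (innerSL ℝ ((r ^ 2)⁻¹ • radialKernel φ (r⁻¹ • (y - x)) • (y - x))) y := by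
  have norm_rescale (z : V) : ‖r⁻¹ • (z - x)‖ = ‖z - x‖ / r := by
    rw [norm_smul, norm_inv, Real.norm_of_nonneg hr.le, inv_mul_eq_div]
  have h := (hφ.hasFDerivAt_comp_norm (r⁻¹ • (y - x))).comp y
    (((hasFDerivAt_id y).sub_const x).const_smul r⁻¹)
  refine (h.congr_of_eventuallyEq (.of_forall fun z ↦ ?_)).congr_fderiv ?_
  · simp [norm_rescale]
  · ext w
    simp
    ring

variable [FiniteDimensional ℝ V] [MeasurableSpace V] [BorelSpace V] {f : V → ℝ} {x : V} {r : ℝ}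

theorem smoothedSphereIntegral_eq_integral_radialKernel (φ : ℝ → ℝ) (f : V → ℝ) (x : V)
    (hr : 0 < r) : smoothedSphereIntegral φ f x r =
      -(r⁻¹ * ∫ y, f y * radialKernel φ (r⁻¹ • (y - x))) := by
  rw [smoothedSphereIntegral, ← integral_const_mul]
  congr 2 with y
  rw [radialKernel, norm_smul, norm_inv, Real.norm_of_nonneg hr.le, inv_mul_eq_div]
  field_simp

theorem smoothedSphereIntegral_eq_zpow_mul_integral (φ : ℝ → ℝ) (f : V → ℝ) (x : V) (hr : 0 < r) :
    smoothedSphereIntegral φ f x r =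
      -(r ^ ((finrank ℝ V : ℤ) - 1) * ∫ z, f (x + r • z) * radialKernel φ z) := by
  have change_of_variables : ∫ y, f y * radialKernel φ (r⁻¹ • (y - x)) =
      r ^ finrank ℝ V * ∫ z, f (x + r • z) * radialKernel φ z := by
    rw [← integral_add_left_eq_self _ x, ← smul_eq_mul (r ^ _),
      ← Measure.integral_comp_inv_smul_of_nonneg _ (fun z ↦ f (x + r • z) * radialKernel φ z) hr.le]
    simp [smul_inv_smul₀ hr.ne']
  rw [smoothedSphereIntegral_eq_integral_radialKernel φ f x hr, change_of_variables,
    zpow_sub_one₀ hr.ne', zpow_natCast]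
  ring

theorem IsRadialCutoff.hasDerivAt_integral_rescale (hφ : IsRadialCutoff φ)
    (hf : ∀ y ∈ closedBall x r, ContDiffAt ℝ 1 f y) (hr : 0 < r) :
    HasDerivAt (fun t ↦ ∫ z, f (x + t • z) * radialKernel φ z)
      (∫ z, fderiv ℝ f (x + r • z) z * radialKernel φ z) r := by
  let s : Set ℝ := {t | ∀ z ∈ closedBall (0 : V) 1, ContDiffAt ℝ 1 f (x + t • z)}
  have hs : s ∈ 𝓝 r :=
    eventually_forall_add_smul_of_forall_closedBall
      (fun y hy ↦ (hf y hy).eventually (by simp)) hr.le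
  have contDiffAt_on_tsupport : ∀ t ∈ s, ∀ z ∈ tsupport (radialKernel φ : V → ℝ),
      ContDiffAt ℝ 1 f (x + t • z) :=
    fun t ht z hz ↦ ht z (hφ.tsupport_radialKernel_subset hz)
  refine hasDerivAt_integral_mul_of_hasCompactSupport (F := fun t z ↦ f (x + t • z))
    (F' := fun t z ↦ fderiv ℝ f (x + t • z) z) hs hφ.continuous_radialKernel
    hφ.hasCompactSupport_radialKernel ?_ ?_ ?_
  · exact fun t ht z hz ↦ ((contDiffAt_on_tsupport t ht z hz).continuousAt.comp
      (f := fun z ↦ x + t • z) (by fun_prop)).continuousWithinAt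
  · rintro ⟨t, z⟩ ⟨ht, hz⟩
    have continuousAt_fderiv : ContinuousAt (fderiv ℝ f) (x + t • z) :=
      ((contDiffAt_on_tsupport t ht z hz).fderiv_right (m := 0) le_rfl).continuousAt
    exact ((continuousAt_fderiv.comp (x := (t, z)) (f := fun p : ℝ × V ↦ x + p.1 • p.2)
      (by fun_prop)).clm_apply continuousAt_snd).continuousWithinAt
  · intro t ht z hz
    have hasDerivAt_rescale : HasDerivAt (fun t : ℝ ↦ x + t • z) z t := by
      simpa using ((hasDerivAt_id t).smul_const z).const_add x
    exact ((contDiffAt_on_tsupport t ht z hz).differentiableAt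
      one_ne_zero).hasFDerivAt.comp_hasDerivAt t hasDerivAt_rescale

theorem IsRadialCutoff.hasDerivAt_smoothedSphereIntegral (hφ : IsRadialCutoff φ)
    (hf : ∀ y ∈ closedBall x r, ContDiffAt ℝ 1 f y) (hr : 0 < r) :
    HasDerivAt (smoothedSphereIntegral φ f x)
      (((finrank ℝ V : ℝ) - 1) / r * smoothedSphereIntegral φ f x r +
        r⁻¹ * smoothedSphereIntegral φ (fun y ↦ fderiv ℝ f y (y - x)) x r) r := by
  have h := ((hasDerivAt_zpow ((finrank ℝ V : ℤ) - 1) r (.inl hr.ne')).mul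
    (hφ.hasDerivAt_integral_rescale hf hr)).neg
  refine (h.congr_of_eventuallyEq ?_).congr_deriv ?_
  · filter_upwards [Ioi_mem_nhds hr] with t ht
    exact smoothedSphereIntegral_eq_zpow_mul_integral φ f x ht
  · rw [smoothedSphereIntegral_eq_zpow_mul_integral φ f x hr,
      smoothedSphereIntegral_eq_zpow_mul_integral φ _ x hr, zpow_sub_one₀ hr.ne' (_ - 1)]
    simp only [add_sub_cancel_left, map_smul, smul_eq_mul, mul_assoc, integral_const_mul]
    push_cast
    field_simp
    ring

theorem IsRadialCutoff.smoothedSphereIntegral_fderiv_radial (hφ : IsRadialCutoff φ)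
    (hf : ∀ y ∈ closedBall x r, ContDiffAt ℝ 2 f y) (hr : 0 < r) :
    smoothedSphereIntegral φ (fun y ↦ fderiv ℝ f y (y - x)) x r =
      r * ∫ y, Δ f y * φ (‖y - x‖ / r) := by
  have hsupp := hφ.tsupport_rescale_subset x hr
  have continuous_gradient :
      Continuous fun y ↦ (r ^ 2)⁻¹ • radialKernel φ (r⁻¹ • (y - x)) • (y - x) := by
    have := hφ.continuous_radialKernel (V := V)
    fun_prop
  have green := integral_fderiv_gradient_eq_neg_integral_laplacian_mul (fun y hy ↦ hf y (hsupp hy))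
    ((isCompact_closedBall x r).of_isClosed_subset (isClosed_tsupport _) hsupp)
    (hφ.hasFDerivAt_rescale x hr) continuous_gradient
  simp only [map_smul, smul_eq_mul, integral_const_mul] at green
  rw [smoothedSphereIntegral_eq_integral_radialKernel φ _ x hr, ← neg_eq_iff_eq_neg.2 green]
  simp only [mul_comm (radialKernel φ _)]
  field_simp

theorem IsRadialCutoff.hasDerivAt_smoothedSphereIntegral_of_contDiffAt_two (hφ : IsRadialCutoff φ)
    (hf : ∀ y ∈ closedBall x r, ContDiffAt ℝ 2 f y) (hr : 0 < r) :
    HasDerivAt (smoothedSphereIntegral φ f x)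
      (((finrank ℝ V : ℝ) - 1) / r * smoothedSphereIntegral φ f x r +
        ∫ y, Δ f y * φ (‖y - x‖ / r)) r := by
  convert hφ.hasDerivAt_smoothedSphereIntegral (fun y hy ↦ (hf y hy).of_le one_le_two) hr using 2
  rw [hφ.smoothedSphereIntegral_fderiv_radial hf hr, inv_mul_cancel_left₀ hr.ne']

end RadialCutoff

theorem IsHarmonicOn.harmonicOnNhd {F : Type*} [NormedAddCommGroup F] [InnerProductSpace ℝ F]
    {u : E4 → F} {Ω : Set E4} (hu : IsHarmonicOn u Ω)
    (hΩ : IsOpen Ω) : HarmonicOnNhd u Ω := fun x hx ↦ by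
  refine ⟨(hu.1.contDiffAt (hΩ.mem_nhds hx)).of_le (by norm_cast), ?_⟩
  filter_upwards [hΩ.mem_nhds hx] with y hy
  simpa [laplacian_eq_iteratedFDeriv_orthonormalBasis u (EuclideanSpace.basisFun (Fin 4) ℝ)]
    using hu.2 y hy

theorem stmt_10_general {V : Type*} [NormedAddCommGroup V] [InnerProductSpace ℝ V]
    [FiniteDimensional ℝ V] [MeasurableSpace V] [BorelSpace V]
    {F : Type*} [NormedAddCommGroup F] [InnerProductSpace ℝ F]
    {ι : Type*} [Fintype ι] (b : OrthonormalBasis ι ℝ V)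
    {φ : ℝ → ℝ} (hφ : IsRadialCutoff φ) {u : V → F} {x : V} {r : ℝ} (hr : 0 < r)
    (hu : HarmonicOnNhd u (closedBall x r)) :
    HasDerivAt (smoothedSphereIntegral φ (fun y ↦ ‖u y‖ ^ 2) x)
      (((finrank ℝ V : ℝ) - 1) / r * smoothedSphereIntegral φ (fun y ↦ ‖u y‖ ^ 2) x r +
        2 * ∫ y, (∑ i, ‖fderiv ℝ u y (b i)‖ ^ 2) * φ (‖y - x‖ / r)) r := by
  have laplacian_norm_sq_of_harmonic : ∀ y ∈ closedBall x r,
      Δ (fun y ↦ ‖u y‖ ^ 2) y = 2 * ∑ i, ‖fderiv ℝ u y (b i)‖ ^ 2 := fun y hy ↦ by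
    rw [laplacian_norm_sq (hu y hy).1 b, (hu y hy).2.self_of_nhds, Pi.zero_apply,
      inner_zero_right, mul_zero, add_zero]
  convert hφ.hasDerivAt_smoothedSphereIntegral_of_contDiffAt_two
    (fun y hy ↦ (hu y hy).1.norm_sq ℝ) hr using 2
  rw [← integral_const_mul]
  congr with y
  by_cases hy : y ∈ closedBall x r
  · rw [laplacian_norm_sq_of_harmonic y hy, mul_assoc]
  · simp only [hφ.rescale_eq_zero_of_notMem_closedBall hr hy, mul_zero]

end General

/-- Flat-case identity (4.4): `∂_r H_φ(x,r) = (3/r) H_φ(x,r) + 2 D_φ(x,r)`. -/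
theorem stmt_10 (φ : ℝ → ℝ) (hφs : ContDiff ℝ (⊤ : ℕ∞) φ) (hφa : Antitone φ)
    (hφ1 : ∀ t ≤ (3/4 : ℝ), φ t = 1) (hφ0 : ∀ t, (1:ℝ) ≤ t → φ t = 0)
    (Ω : Set E4) (hΩ : IsOpen Ω) (u : E4 → E) (hu : IsHarmonicOn u Ω)
    (x : E4) (r : ℝ) (hr : 0 < r)
    (hball : ∀ᶠ r' in nhds r, closedBall x r' ⊆ Ω) :
    HasDerivAt (fun t => Hphi φ u x t)
      (3 / r * Hphi φ u x r + 2 * Dphi φ u x r) r := by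
  have hφ : IsRadialCutoff φ := .of_eventuallyEq_const (hφs.of_le (by simp))
    (Filter.eventually_of_mem (Iic_mem_nhds (by norm_num)) hφ1) hφ0
  have h := stmt_10_general (EuclideanSpace.basisFun (Fin 4) ℝ) hφ hr
    ((hu.harmonicOnNhd hΩ).mono hball.self_of_nhds)
  refine h.congr_deriv ?_
  norm_num [Hphi, Dphi, gradSq, smoothedSphereIntegral]
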